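/- arXiv:2311.12244 — 3 statements merged into one kernel-verified Lean document; each statement's English description precedes it below -/
import Mathlib

section
/- Let (S, A, O, H, ρ0, P, Ω, r) be a finite POMDP that is L-decodable with decoder p* (L ≥ 1). Then there exist a finite set Z with |Z| ≤ |S|·(|O|·|A|)^(L−1) and a map p : X × A → PMF(Z), depending only on the POMDP and the decoder p* (in particular, independent of the policy and of the step h), such that: for every L-step policy π and every step h with L−1 ≤ h ≤ H there is a function w_h^π : Z → ℝ for which Q_h^π(τ_h, a) = r(o_h, a) + Σ_{z∈Z} p(x_h, a)(z)·w_h^π(z) holds for every admissible history τ_h of length h (with L-step window x_h and last observation o_h) and every action a ∈ A. -/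
open Finset

/-- A probability distribution on a finite type, given by a real-valued mass function. -/
structure FDist (α : Type) [Fintype α] : Type where
  prob : α → ℝ
  nonneg : ∀ a, 0 ≤ prob a
  sum_one : ∑ a, prob a = 1

/-- A finite POMDP `(S, A, O, H, ρ0, P, Ω, r)`: finite state, action and observation spaces,
horizon `H`, initial state distribution `ρ0`, transition kernel `P`, emission kernel `emit`
(denoted Ω in the text), and reward `r`. -/
structure POMDP (S A O : Type) [Fintype S] [Fintype A] [Fintype O] : Type where
  H : ℕ
  ρ0 : FDist S
  P : S → A → FDist S
  emit : S → FDist O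
  r : O → A → ℝ

/-- A history of length `h`: observations `o_0, …, o_h` and actions `a_0, …, a_{h-1}`. -/
abbrev Hist (O A : Type) (h : ℕ) : Type := (Fin (h + 1) → O) × (Fin h → A)

/-- A (history-dependent) policy: at each step `h` and history `τ_h`, a distribution on actions. -/
abbrev Policy (O A : Type) [Fintype A] : Type := (h : ℕ) → Hist O A h → FDist A

/-- The `L`-step window space `X = (O × A)^(L-1) × O`. -/
abbrev Window (O A : Type) (L : ℕ) : Type := (Fin (L - 1) → O × A) × O

section POMDPDefs

variable {S A O : Type} [Fintype S] [Fintype A] [Fintype O]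

/-- The history of length `h` read off from a full trajectory of observations and actions. -/
def Hist.take (H : ℕ) {h : ℕ} (hh : h ≤ H) (o : Fin (H + 1) → O) (a : Fin (H + 1) → A) :
    Hist O A h :=
  (fun i => o (Fin.castLE (by omega) i), fun i => a (Fin.castLE (by omega) i))

/-- The `L`-step window `x_h = (o_{h-L+1}, a_{h-L+1}, …, a_{h-1}, o_h)` of a history of
length `h` (for `L - 1 ≤ h`). -/
def Hist.window (L : ℕ) {h : ℕ} (hL : L - 1 ≤ h) (τ : Hist O A h) : Window O A L :=
  (fun i =>
      (τ.1 ⟨h + 1 - L + i.val, by have := i.isLt; omega⟩,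
       τ.2 ⟨h + 1 - L + i.val, by have := i.isLt; omega⟩),
    τ.1 (Fin.last h))

/-- The history `τ_h` extended by the action `a`, then alternately by the observations
`ω 0, …, ω (k-1)` (playing the roles of `o_{h+1}, …, o_{h+k}`) and the actions
`α 0, …, α (k-2)` (playing the roles of `a_{h+1}, …, a_{h+k-1}`). -/
def Hist.extend {h : ℕ} (τ : Hist O A h) (a : A) {m : ℕ} (ω : Fin m → O) (α : Fin m → A)
    (k : ℕ) (hk : k ≤ m) : Hist O A (h + k) :=
  (fun i =>
      if hi : i.val ≤ h then τ.1 ⟨i.val, by omega⟩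
      else ω ⟨i.val - h - 1, by have := i.isLt; omega⟩,
    fun i =>
      if hi : i.val < h then τ.2 ⟨i.val, by omega⟩
      else if hi' : i.val = h then a
      else α ⟨i.val - h - 1, by have := i.isLt; omega⟩)

/-- The history `τ_h` extended by one action `a` and one observation `o'`. -/
def Hist.snoc {h : ℕ} (τ : Hist O A h) (a : A) (o' : O) : Hist O A (h + 1) :=
  (fun i => if hi : i.val ≤ h then τ.1 ⟨i.val, by omega⟩ else o',
    fun i => if hi : i.val < h then τ.2 ⟨i.val, by omega⟩ else a)

/-- The probability assigned by the trajectory distribution of the policy `π` to the full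
trajectory `(s_0, o_0, a_0, …, s_H, o_H, a_H)`:
`s_0 ∼ ρ0`, `o_t ∼ Ω(s_t)`, `a_t ∼ π_t(τ_t)`, `s_{t+1} ∼ P(s_t, a_t)`. -/
noncomputable def trajProb (M : POMDP S A O) (π : Policy O A)
    (s : Fin (M.H + 1) → S) (o : Fin (M.H + 1) → O) (a : Fin (M.H + 1) → A) : ℝ :=
  M.ρ0.prob (s 0)
    * ∏ t : Fin (M.H + 1), (M.emit (s t)).prob (o t)
    * ∏ t : Fin (M.H + 1),
        (π t.val (Hist.take M.H (Nat.lt_succ_iff.mp t.isLt) o a)).prob (a t)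
    * ∏ t : Fin M.H, (M.P (s t.castSucc) (a t.castSucc)).prob (s t.succ)

variable [DecidableEq S] [DecidableEq A] [DecidableEq O]

/-- The probability that the history at step `h` equals `τ`, under the trajectory
distribution of `π`. -/
noncomputable def histProb (M : POMDP S A O) (π : Policy O A) {h : ℕ} (hh : h ≤ M.H)
    (τ : Hist O A h) : ℝ :=
  ∑ s : Fin (M.H + 1) → S, ∑ o : Fin (M.H + 1) → O, ∑ a : Fin (M.H + 1) → A,
    if Hist.take M.H hh o a = τ then trajProb M π s o a else 0

/-- The probability that the history at step `h` equals `τ` and `s_h = s0`, under the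
trajectory distribution of `π`. -/
noncomputable def stateHistProb (M : POMDP S A O) (π : Policy O A) {h : ℕ} (hh : h ≤ M.H)
    (τ : Hist O A h) (s0 : S) : ℝ :=
  ∑ s : Fin (M.H + 1) → S, ∑ o : Fin (M.H + 1) → O, ∑ a : Fin (M.H + 1) → A,
    if Hist.take M.H hh o a = τ ∧ s ⟨h, by omega⟩ = s0 then trajProb M π s o a else 0

variable [Nonempty A]

/-- The uniform distribution on a finite nonempty type. -/
noncomputable def uniformDist (A : Type) [Fintype A] [Nonempty A] : FDist A where
  prob _ := (Fintype.card A : ℝ)⁻¹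
  nonneg _ := by positivity
  sum_one := by
    have h : (Fintype.card A : ℝ) ≠ 0 := Nat.cast_ne_zero.mpr Fintype.card_ne_zero
    simp [Finset.sum_const, Finset.card_univ, nsmul_eq_mul, h]

/-- The uniformly random policy. -/
noncomputable def uniformPolicy (O A : Type) [Fintype A] [Nonempty A] : Policy O A :=
  fun _ _ => uniformDist A

/-- A history is admissible if it has positive probability under the uniformly random policy. -/
def Admissible (M : POMDP S A O) {h : ℕ} (hh : h ≤ M.H) (τ : Hist O A h) : Prop :=
  0 < histProb M (uniformPolicy O A) hh τ

/-- The belief `b(τ_h)(s)`: the conditional probability of `s_h = s` given that the history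
equals `τ_h`, under the trajectory distribution of the uniformly random policy. -/
noncomputable def belief (M : POMDP S A O) {h : ℕ} (hh : h ≤ M.H) (τ : Hist O A h)
    (s0 : S) : ℝ :=
  stateHistProb M (uniformPolicy O A) hh τ s0 / histProb M (uniformPolicy O A) hh τ

/-- An outcome of the continuation process from step `h` with `m = H - h` remaining steps:
states `s_h, …, s_H`, observations `o_{h+1}, …, o_H` and actions `a_{h+1}, …, a_H`. -/
abbrev ContOutcome (S O A : Type) (m : ℕ) : Type :=
  (Fin (m + 1) → S) × (Fin m → O) × (Fin m → A)

/-- The probability assigned to the outcome `c` by the continuation process from `(τ, a)`: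
`s_h ∼ b(τ)`, `a_h = a`, and for `h < t ≤ H`: `s_t ∼ P(s_{t-1}, a_{t-1})`, `o_t ∼ Ω(s_t)`,
`a_t ∼ π_t(τ_t)` where `τ_t` is `τ` extended by `(a, o_{h+1}, a_{h+1}, …, o_t)`. -/
noncomputable def contProb (M : POMDP S A O) (π : Policy O A) {h : ℕ} (hh : h ≤ M.H)
    (τ : Hist O A h) (a : A) (c : ContOutcome S O A (M.H - h)) : ℝ :=
  belief M hh τ (c.1 0)
    * ∏ t : Fin (M.H - h),
        ((M.P (c.1 t.castSucc)
              (if ht : t.val = 0 then a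
               else c.2.2 ⟨t.val - 1, by have := t.isLt; omega⟩)).prob (c.1 t.succ)
          * (M.emit (c.1 t.succ)).prob (c.2.1 t)
          * (π (h + t.val + 1)
              (Hist.extend τ a c.2.1 c.2.2 (t.val + 1)
                (by have := t.isLt; omega))).prob (c.2.2 t))

/-- The action-value `Q_h^π(τ_h, a)`: the expectation of `Σ_{t=h}^{H} r(o_t, a_t)` under the
continuation process from `(τ_h, a)`. -/
noncomputable def Qval (M : POMDP S A O) (π : Policy O A) {h : ℕ} (hh : h ≤ M.H)
    (τ : Hist O A h) (a : A) : ℝ :=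
  ∑ c : ContOutcome S O A (M.H - h),
    contProb M π hh τ a c *
      (M.r (τ.1 (Fin.last h)) a + ∑ t : Fin (M.H - h), M.r (c.2.1 t) (c.2.2 t))

/-- The value `V_h^π(τ_h) = Σ_a π_h(τ_h)(a) · Q_h^π(τ_h, a)`. -/
noncomputable def Vval (M : POMDP S A O) (π : Policy O A) {h : ℕ} (hh : h ≤ M.H)
    (τ : Hist O A h) : ℝ :=
  ∑ a : A, (π h τ).prob a * Qval M π hh τ a

/-- The POMDP `M` is `L`-decodable with decoder `pstar` if the belief of every admissible
history of length `h` with `L - 1 ≤ h ≤ H` equals `pstar` applied to its `L`-step window. -/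
def IsDecodable (M : POMDP S A O) (L : ℕ) (pstar : Window O A L → FDist S) : Prop :=
  ∀ (h : ℕ) (hh : h ≤ M.H) (hL : L - 1 ≤ h) (τ : Hist O A h),
    Admissible M hh τ → ∀ s : S, belief M hh τ s = (pstar (Hist.window L hL τ)).prob s

/-- `π` is an `L`-step policy: for `L - 1 ≤ h ≤ H`, `π_h(τ_h)` depends on `τ_h` only
through its `L`-step window. -/
def IsLStepPolicy (M : POMDP S A O) (L : ℕ) (π : Policy O A) : Prop :=
  ∀ (h : ℕ), h ≤ M.H → ∀ (hL : L - 1 ≤ h) (τ τ' : Hist O A h),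
    Hist.window L hL τ = Hist.window L hL τ' → π h τ = π h τ'

end POMDPDefs

/-- Shift of a window by one step, forgetting the new observation. -/
def shiftW {O A : Type} (L : ℕ) (x : Window O A L) (a : A) : Fin (L - 1) → O × A :=
  fun i => if hi : i.val + 1 < L - 1 then x.1 ⟨i.val + 1, hi⟩ else (x.2, a)

theorem shiftW_key {O A : Type} (L : ℕ) {h : ℕ} (hL : L - 1 ≤ h) (τ τ' : Hist O A h) (a a' : A)
    (e : shiftW L (Hist.window L hL τ) a = shiftW L (Hist.window L hL τ') a')
    (j : ℕ) (hj : j ≤ h) (hjL : h + 2 ≤ j + L) :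
    τ.1 ⟨j, by omega⟩ = τ'.1 ⟨j, by omega⟩ ∧
      (∀ hj' : j < h, τ.2 ⟨j, hj'⟩ = τ'.2 ⟨j, hj'⟩) ∧ (j = h → a = a') := by
  have e1 := congrFun e ⟨j + L - (h + 2), by omega⟩
  by_cases hlt : j < h
  · have hi : j + L - (h + 2) + 1 < L - 1 := by omega
    have hidx : h + 1 - L + (j + L - (h + 2) + 1) = j := by omega
    simp only [shiftW, Hist.window, dif_pos hi, hidx, Prod.mk.injEq] at e1
    exact ⟨e1.1, fun _ => e1.2, fun h' => absurd h' (by omega)⟩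
  · have hjh : j = h := by omega
    subst hjh
    have hi : ¬ (j + L - (j + 2) + 1 < L - 1) := by omega
    simp only [shiftW, Hist.window, dif_neg hi, Prod.mk.injEq] at e1
    exact ⟨e1.1, fun h' => absurd h' hlt, fun _ => e1.2⟩

theorem window_extend_eq {O A : Type} (L : ℕ) {h : ℕ} (hL : L - 1 ≤ h)
    (τ τ' : Hist O A h) (a a' : A)
    (e : shiftW L (Hist.window L hL τ) a = shiftW L (Hist.window L hL τ') a')
    {m : ℕ} (ω : Fin m → O) (α : Fin m → A) (t : ℕ) (ht : t + 1 ≤ m)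
    (hL' : L - 1 ≤ h + (t + 1)) :
    Hist.window L hL' (Hist.extend τ a ω α (t + 1) ht) =
      Hist.window L hL' (Hist.extend τ' a' ω α (t + 1) ht) := by
  have key := shiftW_key L hL τ τ' a a' e
  refine Prod.ext ?_ ?_
  · funext i
    have hi := i.isLt
    have hge : h + 2 ≤ (h + (t + 1) + 1 - L + i.val) + L := by omega
    simp only [Hist.window, Hist.extend]
    refine Prod.ext ?_ ?_
    · by_cases h1 : (h + (t + 1) + 1 - L + i.val) ≤ h
      · simp only [dif_pos h1]
        exact (key (h + (t + 1) + 1 - L + i.val) h1 hge).1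
      · simp only [dif_neg h1]
    · by_cases h1 : (h + (t + 1) + 1 - L + i.val) < h
      · simp only [dif_pos h1]
        exact (key (h + (t + 1) + 1 - L + i.val) h1.le hge).2.1 h1
      · by_cases h2 : (h + (t + 1) + 1 - L + i.val) = h
        · simp only [dif_neg h1, dif_pos h2]
          exact (key (h + (t + 1) + 1 - L + i.val) h2.le hge).2.2 h2
        · simp only [dif_neg h1, dif_neg h2]
  · simp [Hist.window, Hist.extend]

section Cont

variable {S A O : Type} [Fintype S] [Fintype A] [Fintype O]

/-- One-step factor of the continuation process. -/
noncomputable def stepF (M : POMDP S A O) (π : Policy O A) {h : ℕ} (τ : Hist O A h) (a : A)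
    {m : ℕ} (s : Fin (m + 1) → S) (ω : Fin m → O) (α : Fin m → A) (t : Fin m) : ℝ :=
  ((M.P (s t.castSucc)
      (if ht : t.val = 0 then a
        else α ⟨t.val - 1, by have := t.isLt; omega⟩)).prob (s t.succ)
    * (M.emit (s t.succ)).prob (ω t)
    * (π (h + t.val + 1)
        (Hist.extend τ a ω α (t.val + 1) (by have := t.isLt; omega))).prob (α t))

theorem sum_fin_snoc {X : Type} [Fintype X] {m : ℕ} (g : (Fin (m + 1) → X) → ℝ) :
    ∑ f, g f = ∑ f : Fin m → X, ∑ x, g (Fin.snoc (α := fun _ => X) f x) := by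
  rw [← (Fin.snocEquiv (fun _ => X)).sum_comp, Fintype.sum_prod_type_right]
  rfl

theorem sum_fin_cons {X : Type} [Fintype X] {m : ℕ} (g : (Fin (m + 1) → X) → ℝ) :
    ∑ f, g f = ∑ x, ∑ f : Fin m → X, g (Fin.cons (α := fun _ => X) x f) := by
  rw [← (Fin.consEquiv (fun _ => X)).sum_comp, Fintype.sum_prod_type]
  rfl

theorem snoc_lt {X : Type} {m : ℕ} (f : Fin m → X) (x : X) (j : ℕ) (hj : j < m) :
    Fin.snoc (α := fun _ => X) f x ⟨j, by omega⟩ = f ⟨j, hj⟩ := by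
  exact Fin.snoc_castSucc (α := fun _ => X) x f ⟨j, hj⟩

theorem extend_snoc {h : ℕ} (τ : Hist O A h) (a : A)
    {m : ℕ} (ω : Fin m → O) (α : Fin m → A) (o : O) (a' : A) (t : ℕ) (ht : t + 1 ≤ m) :
    Hist.extend τ a (Fin.snoc (α := fun _ => O) ω o) (Fin.snoc (α := fun _ => A) α a') (t + 1)
      (by omega) = Hist.extend τ a ω α (t + 1) ht := by
  refine Prod.ext ?_ ?_
  · funext i
    have := i.isLt
    simp only [Hist.extend]
    split_ifs with h1
    · rfl
    · exact snoc_lt ω o _ (by omega)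
  · funext i
    have := i.isLt
    simp only [Hist.extend]
    split_ifs with h1
    · rfl
    · rfl
    · exact snoc_lt α a' _ (by omega)

theorem extend_snoc_last {h : ℕ} (τ : Hist O A h) (a : A)
    {m : ℕ} (ω : Fin (m + 1) → O) (α : Fin m → A) (a' a'' : A) :
    Hist.extend τ a ω (Fin.snoc (α := fun _ => A) α a') (m + 1) le_rfl =
      Hist.extend τ a ω (Fin.snoc (α := fun _ => A) α a'') (m + 1) le_rfl := by
  refine Prod.ext rfl ?_
  funext i
  have := i.isLt
  simp only [Hist.extend]
  split_ifs with h1 h2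
  · rfl
  · rfl
  · rw [snoc_lt α a' _ (by omega), snoc_lt α a'' _ (by omega)]

theorem stepF_snoc (M : POMDP S A O) (π : Policy O A) {h : ℕ} (τ : Hist O A h) (a : A)
    {m : ℕ} (s : Fin (m + 1) → S) (ω : Fin m → O) (α : Fin m → A) (s' : S) (o : O) (a' : A)
    (t : Fin m) :
    stepF M π τ a (Fin.snoc (α := fun _ => S) s s') (Fin.snoc (α := fun _ => O) ω o)
      (Fin.snoc (α := fun _ => A) α a') t.castSucc = stepF M π τ a s ω α t := by
  have ht := t.isLt
  unfold stepF
  have e1 : (Fin.snoc (α := fun _ => S) s s' : Fin (m + 2) → S) t.castSucc.castSucc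
      = s t.castSucc := Fin.snoc_castSucc (α := fun _ => S) s' s _
  have e2 : (Fin.snoc (α := fun _ => S) s s' : Fin (m + 2) → S) t.castSucc.succ
      = s t.succ := Fin.snoc_castSucc (α := fun _ => S) s' s t.succ
  rw [e1, e2, Fin.snoc_castSucc (α := fun _ => O), Fin.snoc_castSucc (α := fun _ => A)]
  have e3 : Hist.extend τ a (Fin.snoc (α := fun _ => O) ω o) (Fin.snoc (α := fun _ => A) α a')
      (t.castSucc.val + 1) (by simp) = Hist.extend τ a ω α (t.val + 1) (by omega) :=
    extend_snoc τ a ω α o a' t.val (by omega)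
  have e4 : (if ht : t.castSucc.val = 0 then a
        else (Fin.snoc (α := fun _ => A) α a' : Fin (m + 1) → A)
          ⟨t.castSucc.val - 1, by have := t.castSucc.isLt; omega⟩) =
      (if ht : t.val = 0 then a else α ⟨t.val - 1, by omega⟩) := by
    by_cases h0 : t.val = 0
    · simp [h0]
    · rw [dif_neg h0, dif_neg (by simpa using h0)]
      exact snoc_lt α a' _ (by omega)
  rw [e4]
  congr 2
  exact congrArg (π (h + t.val + 1)) e3

theorem stepF_last_sum (M : POMDP S A O) (π : Policy O A) {h : ℕ} (τ : Hist O A h) (a : A)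
    {m : ℕ} (s : Fin (m + 1) → S) (ω : Fin m → O) (α : Fin m → A) :
    ∑ s', ∑ o, ∑ a', stepF M π τ a (Fin.snoc (α := fun _ => S) s s')
      (Fin.snoc (α := fun _ => O) ω o) (Fin.snoc (α := fun _ => A) α a') (Fin.last m) = 1 := by
  classical
  by_cases hA : Nonempty A
  swap
  · exact absurd ⟨a⟩ hA
  have key : ∀ s' o a', stepF M π τ a (Fin.snoc (α := fun _ => S) s s')
      (Fin.snoc (α := fun _ => O) ω o) (Fin.snoc (α := fun _ => A) α a') (Fin.last m) =
      (M.P (s (Fin.last m)) (if ht : m = 0 then a else α ⟨m - 1, by omega⟩)).prob s'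
        * (M.emit s').prob o
        * (π (h + m + 1) (Hist.extend τ a (Fin.snoc (α := fun _ => O) ω o)
            (Fin.snoc (α := fun _ => A) α a) (m + 1) le_rfl)).prob a' := by
    intro s' o a'
    unfold stepF
    have e1 : (Fin.snoc (α := fun _ => S) s s' : Fin (m + 2) → S) (Fin.last m).castSucc
      = s (Fin.last m) := Fin.snoc_castSucc (α := fun _ => S) s' s _
    have e2 : (Fin.snoc (α := fun _ => S) s s' : Fin (m + 2) → S) (Fin.last m).succ
      = s' := Fin.snoc_last (α := fun _ => S) s' s
    rw [e1, e2, Fin.snoc_last (α := fun _ => O), Fin.snoc_last (α := fun _ => A)]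
    have e4 : (if ht : (Fin.last m).val = 0 then a
        else (Fin.snoc (α := fun _ => A) α a' : Fin (m + 1) → A)
          ⟨(Fin.last m).val - 1, by have := (Fin.last m).isLt; omega⟩) =
        (if ht : m = 0 then a else α ⟨m - 1, by omega⟩) := by
      by_cases h0 : m = 0
      · simp [h0]
      · rw [dif_neg h0, dif_neg (by simpa using h0)]
        exact snoc_lt α a' _ (by simp; omega)
    rw [e4]
    congr 2
    exact congrArg (π (h + m + 1)) (extend_snoc_last τ a _ α a' a)
  simp only [key, ← Finset.mul_sum, FDist.sum_one, mul_one]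

theorem mass (M : POMDP S A O) (π : Policy O A) {h : ℕ} (τ : Hist O A h) (a : A) (b : S → ℝ)
    (m : ℕ) :
    ∑ s : Fin (m + 1) → S, ∑ ω : Fin m → O, ∑ α : Fin m → A,
      b (s 0) * ∏ t, stepF M π τ a s ω α t = ∑ s, b s := by
  induction m with
  | zero =>
    simp only [Finset.univ_eq_empty, Finset.prod_empty, mul_one]
    simp only [Finset.univ_unique, Finset.sum_singleton]
    rw [← (Equiv.funUnique (Fin 1) S).sum_comp]
    rfl
  | succ m ih =>
    rw [sum_fin_snoc, ← ih]
    refine Finset.sum_congr rfl fun s _ => ?_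
    simp_rw [sum_fin_snoc (X := O), sum_fin_snoc (X := A)]
    rw [Finset.sum_comm]
    refine Finset.sum_congr rfl fun ω _ => ?_
    rw [Finset.sum_congr rfl fun s' _ => Finset.sum_comm, Finset.sum_comm]
    refine Finset.sum_congr rfl fun α _ => ?_
    simp_rw [Fin.prod_univ_castSucc (n := m), stepF_snoc]
    have e0 : ∀ s', (Fin.snoc (α := fun _ => S) s s' : Fin (m + 2) → S) 0 = s 0 := fun s' =>
      Fin.snoc_castSucc (α := fun _ => S) s' s 0
    simp_rw [e0, ← mul_assoc, ← Finset.mul_sum]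
    rw [stepF_last_sum, mul_one]

/-- The expected future reward given the next state. -/
noncomputable def futR (M : POMDP S A O) [DecidableEq S] (π : Policy O A) {h : ℕ} (k : ℕ)
    (s' : S) (τ : Hist O A h) (a : A) : ℝ :=
  ∑ s : Fin (k + 1) → S, ∑ ω : Fin (k + 1) → O, ∑ α : Fin (k + 1) → A,
    if s 0 = s' then
      ((M.emit (s 0)).prob (ω 0) *
        (π (h + 0 + 1) (Hist.extend τ a ω α (0 + 1) (by omega))).prob (α 0)) *
      (∏ t : Fin k, ((M.P (s t.castSucc) (α t.castSucc)).prob (s t.succ) *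
        (M.emit (s t.succ)).prob (ω t.succ) *
        (π (h + (t.val + 1) + 1) (Hist.extend τ a ω α (t.val + 1 + 1)
          (by have := t.isLt; omega))).prob (α t.succ))) *
      (∑ t, M.r (ω t) (α t))
    else 0

theorem futR_eq (M : POMDP S A O) [DecidableEq S] (π : Policy O A) {h : ℕ} (k : ℕ)
    (τ : Hist O A h) (a : A) (b : S → ℝ) :
    ∑ s : Fin (k + 1 + 1) → S, ∑ ω : Fin (k + 1) → O, ∑ α : Fin (k + 1) → A,
      (b (s 0) * ∏ t, stepF M π τ a s ω α t) * (∑ t, M.r (ω t) (α t)) =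
    ∑ s', (∑ s0, b s0 * (M.P s0 a).prob s') * futR M π k s' τ a := by
  rw [sum_fin_cons]
  have hR : ∀ s0, ∑ s', b s0 * (M.P s0 a).prob s' * futR M π k s' τ a =
      ∑ s : Fin (k + 1) → S, ∑ ω : Fin (k + 1) → O, ∑ α : Fin (k + 1) → A,
        (b s0 * ∏ t, stepF M π τ a (Fin.cons (α := fun _ => S) s0 s) ω α t)
          * (∑ t, M.r (ω t) (α t)) := by
    intro s0
    simp only [futR, Finset.mul_sum]
    rw [Finset.sum_comm]
    refine Finset.sum_congr rfl fun s _ => ?_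
    rw [Finset.sum_comm]
    refine Finset.sum_congr rfl fun ω _ => ?_
    rw [Finset.sum_comm]
    refine Finset.sum_congr rfl fun α _ => ?_
    simp only [mul_ite, mul_zero, Finset.sum_ite_eq, Finset.mem_univ, if_true]
    rw [Fin.prod_univ_succ]
    have e0 : stepF M π τ a (Fin.cons (α := fun _ => S) s0 s) ω α 0 =
      (M.P s0 a).prob (s 0) * (M.emit (s 0)).prob (ω 0) *
        (π (h + 0 + 1) (Hist.extend τ a ω α (0 + 1) (by omega))).prob (α 0) := rfl
    have e1 : ∀ t : Fin k, stepF M π τ a (Fin.cons (α := fun _ => S) s0 s) ω α t.succ =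
      (M.P (s t.castSucc) (α t.castSucc)).prob (s t.succ) *
        (M.emit (s t.succ)).prob (ω t.succ) *
        (π (h + (t.val + 1) + 1) (Hist.extend τ a ω α (t.val + 1 + 1)
          (by have := t.isLt; omega))).prob (α t.succ) := fun t => rfl
    rw [e0, Finset.prod_congr rfl fun t _ => e1 t]
    simp only [← Finset.mul_sum]
    ring
  refine (Finset.sum_congr rfl fun s0 _ => (hR s0).symm).trans ?_
  rw [Finset.sum_comm]
  refine Finset.sum_congr rfl fun s' _ => ?_
  rw [Finset.sum_mul]

end Cont

section Cont2

variable {S A O : Type} [Fintype S] [Fintype A] [Fintype O]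
  [DecidableEq S] [DecidableEq A] [DecidableEq O]

theorem futR_congr (M : POMDP S A O) (L : ℕ) (π : Policy O A)
    (hπ : IsLStepPolicy M L π) {h : ℕ} (hL : L - 1 ≤ h) (k : ℕ) (hk : h + (k + 1) ≤ M.H)
    (s' : S) (τ τ' : Hist O A h) (a a' : A)
    (e : shiftW L (Hist.window L hL τ) a = shiftW L (Hist.window L hL τ') a') :
    futR M π k s' τ a = futR M π k s' τ' a' := by
  have key : ∀ (ω : Fin (k + 1) → O) (α : Fin (k + 1) → A) (t : ℕ) (ht : t + 1 ≤ k + 1),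
      π (h + t + 1) (Hist.extend τ a ω α (t + 1) ht) =
        π (h + t + 1) (Hist.extend τ' a' ω α (t + 1) ht) := by
    intro ω α t ht
    exact hπ (h + t + 1) (by omega) (by omega) _ _
      (window_extend_eq L hL τ τ' a a' e ω α t ht (by omega))
  unfold futR
  refine Finset.sum_congr rfl fun s _ => Finset.sum_congr rfl fun ω _ =>
    Finset.sum_congr rfl fun α _ => ?_
  rw [key ω α 0 (by omega)]
  rw [Finset.prod_congr rfl fun t _ => by
    rw [key ω α (t.val + 1) (by have := t.isLt; omega)]]

theorem Qval_eq [Nonempty A] (M : POMDP S A O) (π : Policy O A) {h : ℕ} (hh : h ≤ M.H)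
    (τ : Hist O A h) (a : A) (hb : ∑ s, belief M hh τ s = 1) (m : ℕ) (hm : M.H - h = m) :
    Qval M π hh τ a = M.r (τ.1 (Fin.last h)) a +
      ∑ s : Fin (m + 1) → S, ∑ ω : Fin m → O, ∑ α : Fin m → A,
        (belief M hh τ (s 0) * ∏ t, stepF M π τ a s ω α t) * (∑ t, M.r (ω t) (α t)) := by
  subst hm
  have hmass := mass M π τ a (belief M hh τ) (M.H - h)
  rw [hb] at hmass
  have h1 : Qval M π hh τ a = ∑ s : Fin (M.H - h + 1) → S, ∑ ω : Fin (M.H - h) → O,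
      ∑ α : Fin (M.H - h) → A,
        (belief M hh τ (s 0) * ∏ t, stepF M π τ a s ω α t) *
          (M.r (τ.1 (Fin.last h)) a + ∑ t, M.r (ω t) (α t)) := by
    unfold Qval
    simp_rw [Fintype.sum_prod_type]
    rfl
  rw [h1]
  simp_rw [mul_add, Finset.sum_add_distrib, ← Finset.sum_mul]
  rw [hmass, one_mul]

/-- The representation distribution. -/
noncomputable def repD (M : POMDP S A O) (L : ℕ) (pstar : Window O A L → FDist S)
    (x : Window O A L) (a : A) : FDist (S × (Fin (L - 1) → O × A)) where
  prob z := if z.2 = shiftW L x a then ∑ s0, (pstar x).prob s0 * (M.P s0 a).prob z.1 else 0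
  nonneg z := by
    split_ifs
    · exact Finset.sum_nonneg fun s _ => mul_nonneg (FDist.nonneg _ _) (FDist.nonneg _ _)
    · exact le_rfl
  sum_one := by
    rw [Fintype.sum_prod_type]
    simp only [Finset.sum_ite_eq', Finset.mem_univ, if_true]
    rw [Finset.sum_comm]
    simp only [← Finset.mul_sum, FDist.sum_one, mul_one]

theorem main_rep [Nonempty A] (M : POMDP S A O) (L : ℕ)
    (pstar : Window O A L → FDist S) (hdec : IsDecodable M L pstar)
    (π : Policy O A) (hπ : IsLStepPolicy M L π) (h : ℕ) (hL : L - 1 ≤ h) (hh : h ≤ M.H) :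
    ∃ w : S × (Fin (L - 1) → O × A) → ℝ,
      ∀ τ : Hist O A h, Admissible M hh τ → ∀ a : A,
        Qval M π hh τ a = M.r (τ.1 (Fin.last h)) a +
          ∑ z, (repD M L pstar (Hist.window L hL τ) a).prob z * w z := by
  have hb : ∀ τ : Hist O A h, Admissible M hh τ → ∑ s, belief M hh τ s = 1 := by
    intro τ hτ
    rw [Finset.sum_congr rfl fun s _ => hdec h hh hL τ hτ s, FDist.sum_one]
  rcases hm : M.H - h with _ | k
  · refine ⟨fun _ => 0, fun τ hτ a => ?_⟩
    rw [Qval_eq M π hh τ a (hb τ hτ) 0 hm]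
    simp
  · have hfac : ∀ s', ∃ g : (Fin (L - 1) → O × A) → ℝ, ∀ (τ : Hist O A h) (a : A),
        futR M π k s' τ a = g (shiftW L (Hist.window L hL τ) a) := by
      intro s'
      have hF : Function.FactorsThrough (fun q : Hist O A h × A => futR M π k s' q.1 q.2)
          (fun q : Hist O A h × A => shiftW L (Hist.window L hL q.1) q.2) := fun q q' e =>
        futR_congr M L π hπ hL k (by omega) s' q.1 q'.1 q.2 q'.2 e
      obtain ⟨g, hg⟩ := (Function.factorsThrough_iff _).1 hF
      exact ⟨g, fun τ a => congrFun hg (τ, a)⟩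
    choose g hg using hfac
    refine ⟨fun z => g z.1 z.2, fun τ hτ a => ?_⟩
    rw [Qval_eq M π hh τ a (hb τ hτ) (k + 1) hm, futR_eq, Fintype.sum_prod_type]
    congr 1
    refine Finset.sum_congr rfl fun s' _ => ?_
    simp only [repD, ite_mul, zero_mul, Finset.sum_ite_eq', Finset.mem_univ, if_true]
    rw [hg]
    simp only [hdec h hh hL τ hτ]

end Cont2

/-- In an `L`-decodable finite POMDP, there is a latent space `Z` with
`|Z| ≤ |S|·(|O|·|A|)^(L-1)` and a representation `p : X × A → PMF(Z)`, independent of the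
policy and the step, such that for every `L`-step policy `π` and every step `h` with
`L-1 ≤ h ≤ H` the action-value function is linear in `p`:
`Q_h^π(τ_h, a) = r(o_h, a) + Σ_z p(x_h, a)(z)·w_h^π(z)`. -/
theorem statement0
    {S A O : Type} [Fintype S] [Fintype A] [Fintype O]
    [Nonempty S] [Nonempty A] [Nonempty O]
    [DecidableEq S] [DecidableEq A] [DecidableEq O]
    (M : POMDP S A O) (L : ℕ) (hL1 : 1 ≤ L)
    (pstar : Window O A L → FDist S)
    (hdec : IsDecodable M L pstar) :
    ∃ n : ℕ, n ≤ Fintype.card S * (Fintype.card O * Fintype.card A) ^ (L - 1) ∧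
      ∃ p : Window O A L → A → FDist (Fin n),
        ∀ π : Policy O A, IsLStepPolicy M L π →
          ∀ (h : ℕ) (hL : L - 1 ≤ h) (hh : h ≤ M.H),
            ∃ w : Fin n → ℝ,
              ∀ τ : Hist O A h, Admissible M hh τ → ∀ a : A,
                Qval M π hh τ a =
                  M.r (τ.1 (Fin.last h)) a +
                    ∑ z : Fin n, (p (Hist.window L hL τ) a).prob z * w z := by
  classical
  let Z := S × (Fin (L - 1) → O × A)
  let e : Z ≃ Fin (Fintype.card Z) := Fintype.equivFin Z
  refine ⟨Fintype.card Z, ?_, ?_⟩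
  · simp [Z]
  · refine ⟨fun x a => ⟨fun i => (repD M L pstar x a).prob (e.symm i),
      fun i => FDist.nonneg _ _, ?_⟩, ?_⟩
    · rw [e.symm.sum_comp (fun z => (repD M L pstar x a).prob z)]
      exact FDist.sum_one _
    · intro π hπ h hL hh
      obtain ⟨w, hw⟩ := main_rep M L pstar hdec π hπ h hL hh
      refine ⟨fun i => w (e.symm i), fun τ hτ a => ?_⟩
      rw [hw τ hτ a]
      congr 1
      exact (e.symm.sum_comp
        (fun z => (repD M L pstar (Hist.window L hL τ) a).prob z * w z)).symm
end

section
/- Let (S, A, O, H, ρ0, P, Ω, r) be a finite POMDP that is L-decodable with decoder p* (L ≥ 1). Then there exist a finite set Z with |Z| ≤ |S|·(|O|·|A|)^(L−1) and a map p : X × A → PMF(Z), depending only on the POMDP and the decoder p* (independent of the policy and of the step h), such that: for every L-step policy π and every step h with L−1 ≤ h ≤ H−L there is a kernel G : Z → PMF(X) for which, for every admissible history τ_h of length h (with L-step window x_h) and every action a ∈ A, the distribution of the L-step window x_{h+L} of the random history at step h+L under the continuation process from (τ_h, a) equals the mixture x ↦ Σ_{z∈Z} p(x_h, a)(z)·G(z)(x).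 -/
open Finset

/-- Total mass of a sequentially generated process is one. -/
theorem sum_prod_seq {Y : Type} [Fintype Y] [Nonempty Y] : ∀ (m : ℕ) (f : Fin m → (Fin m → Y) → ℝ),
    (∀ t y y', (∀ i, i ≤ t → y i = y' i) → f t y = f t y') →
    (∀ t y, ∑ v, f t (Function.update y t v) = 1) →
    ∑ y, ∏ t, f t y = 1 := by
  intro m
  induction m with
  | zero => intro f _ _; simp
  | succ m ih =>
    intro f hf hs
    rw [← (Fin.consEquiv (fun _ : Fin (m + 1) => Y)).sum_comp, Fintype.sum_prod_type]
    obtain ⟨y0⟩ : Nonempty (Fin (m + 1) → Y) := inferInstance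
    have key : ∀ v : Y, ∑ y : Fin m → Y, ∏ t, f t (Fin.cons v y : Fin (m + 1) → Y)
        = f 0 (Function.update y0 0 v) := by
      intro v
      have h0 : ∀ y : Fin m → Y, ∏ t, f t (Fin.cons v y : Fin (m + 1) → Y)
          = f 0 (Function.update y0 0 v) * ∏ t : Fin m, f t.succ (Fin.cons v y : Fin (m + 1) → Y) := by
        intro y
        rw [Fin.prod_univ_succ]
        congr 1
        apply hf
        intro i hi
        have : i = 0 := by simpa using hi
        subst this
        simp
      simp_rw [h0]
      rw [← Finset.mul_sum, ih (fun t y => f t.succ (Fin.cons v y : Fin (m + 1) → Y)), mul_one]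
      · intro t y y' h
        apply hf
        intro i hi
        rcases Fin.eq_zero_or_eq_succ i with rfl | ⟨j, rfl⟩
        · simp
        · simpa using h j (by simpa using hi)
      · intro t y
        rw [← hs t.succ (Fin.cons v y)]
        refine Finset.sum_congr rfl fun w _ => ?_
        rw [Fin.cons_update]
    rw [← hs 0 y0]
    exact Finset.sum_congr rfl fun v _ => key v

section Helpers

variable {S A O : Type} [Fintype S] [Fintype A] [Fintype O]

/-- Drop the oldest pair of a window and append `(o_h, a)`. -/
def shiftWin (L : ℕ) (x : Window O A L) (a : A) : Fin (L - 1) → O × A :=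
  fun i => if hi : i.val + 1 < L - 1 then x.1 ⟨i.val + 1, hi⟩ else (x.2, a)

theorem shiftWin_fst (L : ℕ) {h : ℕ} (hL : L - 1 ≤ h) (τ : Hist O A h) (a : A)
    (i : Fin (L - 1)) (j : Fin (h + 1)) (hj : j.val + L = h + 2 + i.val) :
    (shiftWin L (Hist.window L hL τ) a i).1 = τ.1 j := by
  have := i.isLt
  unfold shiftWin Hist.window
  split_ifs with hi
  · simp only
    refine congrArg _ (Fin.ext ?_)
    simp only
    omega
  · simp only
    refine congrArg _ (Fin.ext ?_)
    simp only [Fin.val_last]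
    omega

theorem shiftWin_snd (L : ℕ) {h : ℕ} (hL : L - 1 ≤ h) (τ : Hist O A h) (a : A)
    (i : Fin (L - 1)) (j : Fin h) (hj : j.val + L = h + 2 + i.val) :
    (shiftWin L (Hist.window L hL τ) a i).2 = τ.2 j := by
  have := i.isLt
  have := j.isLt
  unfold shiftWin Hist.window
  rw [dif_pos (by omega)]
  simp only
  refine congrArg _ (Fin.ext ?_)
  simp only
  omega

theorem shiftWin_last (L : ℕ) {h : ℕ} (hL : L - 1 ≤ h) (τ : Hist O A h) (a : A)
    (i : Fin (L - 1)) (hj : h + L = h + 2 + i.val) :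
    (shiftWin L (Hist.window L hL τ) a i).2 = a := by
  unfold shiftWin
  rw [dif_neg (by omega)]

theorem window_extend_congr (L : ℕ) {h : ℕ} (hL : L - 1 ≤ h) (τ τ' : Hist O A h) (a a' : A)
    (hw : shiftWin L (Hist.window L hL τ) a = shiftWin L (Hist.window L hL τ') a')
    {m : ℕ} (ω : Fin m → O) (α : Fin m → A) (k : ℕ) (hk : k ≤ m) (hk1 : 1 ≤ k)
    (hLk : L - 1 ≤ h + k) :
    Hist.window L hLk (Hist.extend τ a ω α k hk) =
      Hist.window L hLk (Hist.extend τ' a' ω α k hk) := by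
  unfold Hist.window Hist.extend
  refine Prod.ext (funext fun i => Prod.ext ?_ ?_) ?_
  · have := i.isLt
    simp only
    split_ifs with hi
    · have e1 := shiftWin_fst L hL τ a ⟨k + i.val - 1, by omega⟩ ⟨h + k + 1 - L + i.val, by omega⟩
        (by simp only; omega)
      have e2 := shiftWin_fst L hL τ' a' ⟨k + i.val - 1, by omega⟩ ⟨h + k + 1 - L + i.val, by omega⟩
        (by simp only; omega)
      rw [← e1, ← e2, hw]
    · rfl
  · have := i.isLt
    simp only
    split_ifs with hi hi'
    · have e1 := shiftWin_snd L hL τ a ⟨k + i.val - 1, by omega⟩ ⟨h + k + 1 - L + i.val, by omega⟩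
        (by simp only; omega)
      have e2 := shiftWin_snd L hL τ' a' ⟨k + i.val - 1, by omega⟩ ⟨h + k + 1 - L + i.val, by omega⟩
        (by simp only; omega)
      rw [← e1, ← e2, hw]
    · have e1 := shiftWin_last L hL τ a ⟨k + i.val - 1, by omega⟩ (by simp only; omega)
      have e2 := shiftWin_last L hL τ' a' ⟨k + i.val - 1, by omega⟩ (by simp only; omega)
      rw [← e1, ← e2, hw]
    · rfl
  · simp only [Fin.val_last]
    rw [dif_neg (by omega), dif_neg (by omega)]

/-- One-step factor of the continuation process, with first state drawn from `κ`. -/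
noncomputable def stepW (M : POMDP S A O) (π : Policy O A) {h : ℕ} (τ : Hist O A h) (a : A)
    {m : ℕ} (κ : S → ℝ) (t : Fin m) (y : Fin m → S × O × A) : ℝ :=
  (if ht : t.val = 0 then κ (y t).1
    else (M.P (y ⟨t.val - 1, by have := t.isLt; omega⟩).1
      (y ⟨t.val - 1, by have := t.isLt; omega⟩).2.2).prob (y t).1)
  * (M.emit (y t).1).prob (y t).2.1
  * (π (h + t.val + 1) (Hist.extend τ a (fun i => (y i).2.1) (fun i => (y i).2.2) (t.val + 1)
      t.isLt)).prob (y t).2.2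

theorem extend_congr {h : ℕ} (τ : Hist O A h) (a : A) {m : ℕ} (ω ω' : Fin m → O)
    (α α' : Fin m → A) (k : ℕ) (hk : k ≤ m) (h1 : ∀ i : Fin m, i.val < k → ω i = ω' i)
    (h2 : ∀ i : Fin m, i.val + 1 < k → α i = α' i) :
    Hist.extend τ a ω α k hk = Hist.extend τ a ω' α' k hk := by
  unfold Hist.extend
  refine Prod.ext (funext fun i => ?_) (funext fun i => ?_)
  · have := i.isLt
    simp only
    split_ifs with hi
    · rfl
    · exact h1 _ (by simp only; omega)
  · have := i.isLt
    simp only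
    split_ifs with hi
    · rfl
    · rfl
    · exact h2 _ (by simp only; omega)

theorem stepW_sum [Nonempty S] [Nonempty A] [Nonempty O]
    (M : POMDP S A O) (π : Policy O A) {h : ℕ} (τ : Hist O A h) (a : A)
    {m : ℕ} (κ : S → ℝ) (hκ : ∑ s, κ s = 1) :
    ∑ y : Fin m → S × O × A, ∏ t, stepW M π τ a κ t y = 1 := by
  apply sum_prod_seq
  · intro t y y' hy
    unfold stepW
    have e : Hist.extend τ a (fun i => (y i).2.1) (fun i => (y i).2.2) (t.val + 1) t.isLt
        = Hist.extend τ a (fun i => (y' i).2.1) (fun i => (y' i).2.2) (t.val + 1) t.isLt := by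
      apply extend_congr
      · intro i hi
        rw [hy i (by rw [Fin.le_def]; omega)]
      · intro i hi
        rw [hy i (by rw [Fin.le_def]; omega)]
    rw [e, hy t le_rfl]
    congr 2
    split_ifs with h0
    · rfl
    · rw [hy ⟨t.val - 1, by have := t.isLt; omega⟩ (by rw [Fin.le_def]; simp only; omega)]
  · intro t y
    -- policy argument depends on the new observation only
    obtain ⟨a0⟩ : Nonempty A := inferInstance
    let F : S → ℝ := fun s => (if ht : t.val = 0 then κ s
      else (M.P (y ⟨t.val - 1, by have := t.isLt; omega⟩).1
        (y ⟨t.val - 1, by have := t.isLt; omega⟩).2.2).prob s)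
    have hF : ∑ s, F s = 1 := by
      by_cases ht : t.val = 0
      · simp only [F, dif_pos ht, hκ]
      · simp only [F, dif_neg ht, FDist.sum_one]
    let E : O → Hist O A (h + (t.val + 1)) := fun o =>
      Hist.extend τ a (Function.update (fun i => (y i).2.1) t o) (fun i => (y i).2.2) (t.val + 1)
        t.isLt
    have key : ∀ v : S × O × A, stepW M π τ a κ t (Function.update y t v)
        = F v.1 * ((M.emit v.1).prob v.2.1 * (π (h + t.val + 1) (E v.2.1)).prob v.2.2) := by
      intro v
      have e : Hist.extend τ a (fun i => (Function.update y t v i).2.1)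
          (fun i => (Function.update y t v i).2.2) (t.val + 1) t.isLt = E v.2.1 := by
        apply extend_congr
        · intro i hi
          by_cases hit : i = t
          · subst hit; simp
          · simp [Function.update_of_ne hit]
        · intro i hi
          have hit : i ≠ t := by rintro rfl; omega
          simp [Function.update_of_ne hit]
      unfold stepW
      rw [e, Function.update_self, ← mul_assoc]
      congr 2
      simp only [F]
      split_ifs with h0
      · rfl
      · have hit : (⟨t.val - 1, by have := t.isLt; omega⟩ : Fin m) ≠ t := by
          intro hc
          have := congrArg Fin.val hc
          simp only at this
          omega
        rw [Function.update_of_ne hit]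
    simp_rw [key]
    rw [Fintype.sum_prod_type]
    simp_rw [Fintype.sum_prod_type, ← Finset.mul_sum, FDist.sum_one, mul_one, FDist.sum_one, mul_one]
    exact hF

theorem stepW_prod (M : POMDP S A O) (π : Policy O A) {h : ℕ} (τ : Hist O A h) (a : A)
    {m : ℕ} (hm : 0 < m) (κ : S → ℝ) (y : Fin m → S × O × A) :
    ∏ t, stepW M π τ a κ t y = κ (y ⟨0, hm⟩).1 * ∏ t, stepW M π τ a (fun _ => 1) t y := by
  have e : ∀ t, stepW M π τ a κ t y
      = (if t = ⟨0, hm⟩ then κ (y ⟨0, hm⟩).1 else 1) * stepW M π τ a (fun _ => 1) t y := by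
    intro t
    unfold stepW
    by_cases ht : t = ⟨0, hm⟩
    · subst ht
      simp [mul_assoc]
    · have : t.val ≠ 0 := fun h => ht (Fin.ext h)
      simp [ht, this]
  simp_rw [e]
  rw [Finset.prod_mul_distrib]
  simp

theorem stepW_nonneg (M : POMDP S A O) (π : Policy O A) {h : ℕ} (τ : Hist O A h) (a : A)
    {m : ℕ} (κ : S → ℝ) (hκ : ∀ s, 0 ≤ κ s) (t : Fin m) (y : Fin m → S × O × A) :
    0 ≤ stepW M π τ a κ t y := by
  unfold stepW
  refine mul_nonneg (mul_nonneg ?_ (FDist.nonneg _ _)) (FDist.nonneg _ _)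
  split_ifs
  · exact hκ _
  · exact FDist.nonneg _ _

variable [DecidableEq S] [DecidableEq A] [DecidableEq O]

/-- Law of the window at step `h + L` when `s_{h+1} = s'` and the history is `(τ, a)`. -/
noncomputable def winLaw [Nonempty S] [Nonempty A] [Nonempty O]
    (M : POMDP S A O) (π : Policy O A) (L : ℕ) {h : ℕ} (τ : Hist O A h) (a : A) (m : ℕ)
    (hm : L ≤ m) (s' : S) : FDist (Window O A L) where
  prob x := ∑ y : Fin m → S × O × A,
    if Hist.window L (by omega : L - 1 ≤ h + L)
      (Hist.extend τ a (fun i => (y i).2.1) (fun i => (y i).2.2) L hm) = x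
    then ∏ t, stepW M π τ a (fun s => if s = s' then 1 else 0) t y else 0
  nonneg x := by
    refine Finset.sum_nonneg fun y _ => ?_
    split_ifs
    · exact Finset.prod_nonneg fun t _ => stepW_nonneg M π τ a _
        (fun s => by split_ifs <;> norm_num) t y
    · exact le_rfl
  sum_one := by
    rw [Finset.sum_comm]
    simp only [Finset.sum_ite_eq, Finset.mem_univ, if_true]
    exact stepW_sum M π τ a _ (by simp)

theorem winLaw_congr [Nonempty S] [Nonempty A] [Nonempty O]
    (M : POMDP S A O) (π : Policy O A) (L : ℕ) (hL1 : 1 ≤ L) (hπ : IsLStepPolicy M L π)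
    {h : ℕ} (hL : L - 1 ≤ h) (τ τ' : Hist O A h) (a a' : A)
    (hw : shiftWin L (Hist.window L hL τ) a = shiftWin L (Hist.window L hL τ') a') (m : ℕ)
    (hm : L ≤ m) (hmH : h + m ≤ M.H) (s' : S) (x : Window O A L) :
    (winLaw M π L τ a m hm s').prob x = (winLaw M π L τ' a' m hm s').prob x := by
  unfold winLaw
  simp only
  refine Finset.sum_congr rfl fun y _ => ?_
  rw [window_extend_congr L hL τ τ' a a' hw _ _ L hm hL1]
  have e : ∀ t, stepW M π τ a (fun s => if s = s' then 1 else 0) t y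
      = stepW M π τ' a' (fun s => if s = s' then 1 else 0) t y := by
    intro t
    have := t.isLt
    unfold stepW
    congr 2
    exact hπ (h + t.val + 1) (by omega) (by omega) _ _
      (window_extend_congr L hL τ τ' a a' hw _ _ (t.val + 1) t.isLt (by omega) (by omega))
  simp_rw [e]

/-- Outcomes of the continuation process as an initial state and a sequence of triples. -/
def outEquiv (S O A : Type) (m : ℕ) : S × (Fin m → S × O × A) ≃ ContOutcome S O A m where
  toFun q := (Fin.cons q.1 (fun i => (q.2 i).1), fun i => (q.2 i).2.1, fun i => (q.2 i).2.2)
  invFun c := (c.1 0, fun i => (c.1 i.succ, c.2.1 i, c.2.2 i))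
  left_inv q := by simp
  right_inv c := by
    refine Prod.ext ?_ rfl
    funext i
    refine Fin.cases ?_ (fun j => ?_) i <;> simp

theorem contProb_outEquiv [Nonempty A] (M : POMDP S A O) (π : Policy O A) {h : ℕ}
    (hh : h ≤ M.H) (τ : Hist O A h) (a : A) (s : S) (y : Fin (M.H - h) → S × O × A) :
    contProb M π hh τ a (outEquiv S O A (M.H - h) (s, y))
      = belief M hh τ s * ∏ t, stepW M π τ a (M.P s a).prob t y := by
  unfold contProb outEquiv
  simp only [Equiv.coe_fn_mk, Fin.cons_zero, Fin.cons_succ]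
  congr 1
  refine Finset.prod_congr rfl fun t _ => ?_
  unfold stepW
  congr 2
  by_cases ht : t.val = 0
  · have e : t.castSucc = 0 := Fin.ext ht
    simp only [dif_pos ht, e, Fin.cons_zero]
  · have e : t.castSucc = Fin.succ ⟨t.val - 1, by have := t.isLt; omega⟩ := by
      apply Fin.ext
      simp only [Fin.val_castSucc, Fin.val_succ]
      omega
    simp only [dif_neg ht, e, Fin.cons_succ]

theorem cont_law [Nonempty S] [Nonempty A] [Nonempty O]
    (M : POMDP S A O) (π : Policy O A) (L : ℕ) (hL1 : 1 ≤ L) {h : ℕ} (hh : h ≤ M.H)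
    (hm : L ≤ M.H - h) (τ : Hist O A h) (a : A) (x : Window O A L) :
    (∑ c : ContOutcome S O A (M.H - h),
      if Hist.window L (by omega : L - 1 ≤ h + L) (Hist.extend τ a c.2.1 c.2.2 L hm) = x
      then contProb M π hh τ a c else 0) =
    ∑ s' : S, (∑ s, belief M hh τ s * (M.P s a).prob s') *
      (winLaw M π L τ a (M.H - h) hm s').prob x := by
  have hm0 : 0 < M.H - h := by omega
  rw [← (outEquiv S O A (M.H - h)).sum_comp, Fintype.sum_prod_type, Finset.sum_comm]
  simp_rw [contProb_outEquiv]
  unfold winLaw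
  simp only [Finset.mul_sum]
  conv_rhs => rw [Finset.sum_comm]
  refine Finset.sum_congr rfl fun y _ => ?_
  simp only [outEquiv, Equiv.coe_fn_mk]
  by_cases hx : Hist.window L (by omega : L - 1 ≤ h + L)
      (Hist.extend τ a (fun i => (y i).2.1) (fun i => (y i).2.2) L hm) = x
  · simp only [if_pos hx]
    have e : ∀ κ : S → ℝ, _ := fun κ => stepW_prod M π τ a hm0 κ y
    simp_rw [e (M.P _ a).prob, e (fun s => if s = _ then 1 else 0)]
    simp [Finset.sum_mul, mul_assoc, hx]
  · simp [hx]

end Helpers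

/-- In an `L`-decodable finite POMDP, there is a latent space `Z` with
`|Z| ≤ |S|·(|O|·|A|)^(L-1)` and a representation `p : X × A → PMF(Z)`, independent of the
policy and the step, such that for every `L`-step policy `π` and every step `h` with
`L-1 ≤ h ≤ H-L` there is a kernel `G : Z → PMF(X)` with: for every admissible history
`τ_h` and action `a`, the law of the `L`-step window `x_{h+L}` under the continuation
process from `(τ_h, a)` is the mixture `x ↦ Σ_z p(x_h, a)(z)·G(z)(x)`. -/
theorem statement1
    {S A O : Type} [Fintype S] [Fintype A] [Fintype O]
    [Nonempty S] [Nonempty A] [Nonempty O]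
    [DecidableEq S] [DecidableEq A] [DecidableEq O]
    (M : POMDP S A O) (L : ℕ) (hL1 : 1 ≤ L)
    (pstar : Window O A L → FDist S)
    (hdec : IsDecodable M L pstar) :
    ∃ n : ℕ, n ≤ Fintype.card S * (Fintype.card O * Fintype.card A) ^ (L - 1) ∧
      ∃ p : Window O A L → A → FDist (Fin n),
        ∀ π : Policy O A, IsLStepPolicy M L π →
          ∀ (h : ℕ) (hL : L - 1 ≤ h) (hh : h + L ≤ M.H),
            ∃ G : Fin n → FDist (Window O A L),
              ∀ τ : Hist O A h, Admissible M (by omega : h ≤ M.H) τ → ∀ a : A,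
                ∀ x : Window O A L,
                  (∑ c : ContOutcome S O A (M.H - h),
                      if Hist.window L (by omega : L - 1 ≤ h + L)
                            (Hist.extend τ a c.2.1 c.2.2 L (by omega)) = x
                      then contProb M π (by omega : h ≤ M.H) τ a c else 0) =
                    ∑ z : Fin n, (p (Hist.window L hL τ) a).prob z * (G z).prob x := by
  classical
  let Z := S × (Fin (L - 1) → O × A)
  let e : Z ≃ Fin (Fintype.card Z) := Fintype.equivFin Z
  refine ⟨Fintype.card Z, ?_, ?_⟩
  · simp [Z, Fintype.card_prod, Fintype.card_fun]
  let q : Window O A L → A → Z → ℝ := fun x a z =>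
    (if z.2 = shiftWin L x a then 1 else 0) * ∑ s, (pstar x).prob s * (M.P s a).prob z.1
  refine ⟨fun x a => ⟨fun i => q x a (e.symm i), ?_, ?_⟩, ?_⟩
  · intro i
    refine mul_nonneg (by split_ifs <;> norm_num) (Finset.sum_nonneg fun s _ => ?_)
    exact mul_nonneg (FDist.nonneg _ _) (FDist.nonneg _ _)
  · rw [e.symm.sum_comp (q x a)]
    simp only [q, Z]
    rw [Fintype.sum_prod_type]
    simp only [ite_mul, one_mul, zero_mul, Finset.sum_ite_eq', Finset.mem_univ, if_true]
    rw [Finset.sum_comm]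
    simp_rw [← Finset.mul_sum, FDist.sum_one, mul_one, FDist.sum_one]
  intro π hπ h hL hh
  have hm : L ≤ M.H - h := by omega
  have hch : ∀ w : Fin (L - 1) → O × A, ∃ ta : Hist O A h × A,
      (∃ tb : Hist O A h × A, shiftWin L (Hist.window L hL tb.1) tb.2 = w) →
        shiftWin L (Hist.window L hL ta.1) ta.2 = w := by
    intro w
    by_cases hw : ∃ tb : Hist O A h × A, shiftWin L (Hist.window L hL tb.1) tb.2 = w
    · obtain ⟨tb, htb⟩ := hw
      exact ⟨tb, fun _ => htb⟩
    · exact ⟨Classical.arbitrary _, fun h => absurd h hw⟩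
  choose R hR using hch
  refine ⟨fun i => winLaw M π L (R (e.symm i).2).1 (R (e.symm i).2).2 (M.H - h) hm (e.symm i).1, ?_⟩
  intro τ hτ a x
  rw [cont_law M π L hL1 (by omega) hm τ a x]
  simp only
  rw [e.symm.sum_comp (fun z : Z => q (Hist.window L hL τ) a z *
    (winLaw M π L (R z.2).1 (R z.2).2 (M.H - h) hm z.1).prob x)]
  simp only [q, Z]
  rw [Fintype.sum_prod_type]
  simp only [ite_mul, one_mul, zero_mul, Finset.sum_ite_eq', Finset.mem_univ, if_true]
  refine Finset.sum_congr rfl fun s' _ => ?_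
  rw [winLaw_congr M π L hL1 hπ hL τ (R (shiftWin L (Hist.window L hL τ) a)).1 a
    (R (shiftWin L (Hist.window L hL τ) a)).2 (hR _ ⟨(τ, a), rfl⟩).symm (M.H - h) hm (by omega) s' x]
  congr 1
  refine Finset.sum_congr rfl fun s _ => ?_
  rw [hdec h (by omega) hL τ hτ s]
end

section
/- Let (S, A, O, H, ρ0, P, Ω, r) be a finite POMDP that is L-decodable with decoder p* (L ≥ 1). Then there exist a finite set Z with |Z| ≤ |S|·(|O|·|A|)^(L−1) and a map p : X × A → PMF(Z), depending only on the POMDP and the decoder p* (independent of the policy and of the step h), such that: for every L-step policy π, every step h with L−1 ≤ h ≤ H, and every k ∈ {1, …, L−1} with h+k ≤ H, there exists a function w_k : Z → ℝ for which the expectation of r(o_{h+k}, a_{h+k}) under the continuation process from (τ_h, a) equals Σ_{z∈Z} p(x_h, a)(z)·w_k(z), for every admissible history τ_h of length h (with L-step window x_h) and every action a ∈ A. -/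
open Finset

/-- The last `L - 1` observation-action pairs of the window `x` followed by the action `a`. -/
def ctxt {A O : Type} {L : ℕ} (x : Window O A L) (a : A) : Fin (L - 1) → O × A :=
  fun q => if hq : q.val + 1 < L - 1 then x.1 ⟨q.val + 1, hq⟩ else (x.2, a)

theorem ctxt_obs {A O : Type} {L h : ℕ} (hL2 : 2 ≤ L) (hL : L - 1 ≤ h)
    (τ τ' : Hist O A h) (a a' : A)
    (hc : ctxt (Hist.window L hL τ) a = ctxt (Hist.window L hL τ') a')
    (j : ℕ) (hj : h + 2 ≤ j + L) (hjh : j ≤ h) :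
    τ.1 ⟨j, by omega⟩ = τ'.1 ⟨j, by omega⟩ := by
  have h1 := congrArg Prod.fst (congrFun hc ⟨j + L - (h + 2), by omega⟩)
  unfold ctxt Hist.window at h1
  by_cases hq : j + L - (h + 2) + 1 < L - 1
  · simp only [hq, dif_pos] at h1
    have e : h + 1 - L + (j + L - (h + 2) + 1) = j := by omega
    simpa only [e] using h1
  · simp only [hq, dif_neg, not_false_eq_true] at h1
    have e : j = h := by omega
    subst e
    exact h1

theorem ctxt_act {A O : Type} {L h : ℕ} (hL2 : 2 ≤ L) (hL : L - 1 ≤ h)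
    (τ τ' : Hist O A h) (a a' : A)
    (hc : ctxt (Hist.window L hL τ) a = ctxt (Hist.window L hL τ') a')
    (j : ℕ) (hj : h + 2 ≤ j + L) (hjh : j < h) :
    τ.2 ⟨j, hjh⟩ = τ'.2 ⟨j, hjh⟩ := by
  have h1 := congrArg Prod.snd (congrFun hc ⟨j + L - (h + 2), by omega⟩)
  unfold ctxt Hist.window at h1
  have hq : j + L - (h + 2) + 1 < L - 1 := by omega
  simp only [hq, dif_pos] at h1
  have e : h + 1 - L + (j + L - (h + 2) + 1) = j := by omega
  simpa only [e] using h1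

theorem ctxt_last {A O : Type} {L h : ℕ} (hL2 : 2 ≤ L) (hL : L - 1 ≤ h)
    (τ τ' : Hist O A h) (a a' : A)
    (hc : ctxt (Hist.window L hL τ) a = ctxt (Hist.window L hL τ') a') : a = a' := by
  have h1 := congrArg Prod.snd (congrFun hc ⟨L - 2, by omega⟩)
  unfold ctxt Hist.window at h1
  have hq : ¬ (L - 2 + 1 < L - 1) := by omega
  simpa only [hq, dif_neg, not_false_eq_true] using h1

theorem window_extend {A O : Type} {L h : ℕ} (hL2 : 2 ≤ L) (hL : L - 1 ≤ h)
    (τ τ' : Hist O A h) (a a' : A)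
    (hc : ctxt (Hist.window L hL τ) a = ctxt (Hist.window L hL τ') a')
    {m : ℕ} (ω : Fin m → O) (α : Fin m → A) (k : ℕ) (hk : k + 1 ≤ m)
    (hL' : L - 1 ≤ h + (k + 1)) :
    Hist.window L hL' (Hist.extend τ a ω α (k + 1) hk) =
      Hist.window L hL' (Hist.extend τ' a' ω α (k + 1) hk) := by
  have ha := ctxt_last hL2 hL τ τ' a a' hc
  unfold Hist.window Hist.extend
  refine Prod.ext (funext fun i => Prod.ext ?_ ?_) ?_
  · dsimp only
    split_ifs with hi
    · exact ctxt_obs hL2 hL τ τ' a a' hc _ (by omega) hi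
    · rfl
  · dsimp only
    split_ifs with hi hi'
    · exact ctxt_act hL2 hL τ τ' a a' hc _ (by omega) hi
    · exact ha
    · rfl
  · have : ¬ (h + (k + 1) ≤ h) := by omega
    simp only [Fin.val_last, this, dif_neg, not_false_eq_true]

/-- The part of the continuation probability that only depends on the context. -/
noncomputable def contTail {S A O : Type} [Fintype S] [Fintype A] [Fintype O]
    (M : POMDP S A O) (π : Policy O A) {h m : ℕ}
    (τ : Hist O A h) (a : A) (s : Fin m → S) (ω : Fin m → O) (α : Fin m → A) : ℝ :=
  ∏ t : Fin m,
    ((if ht : t.val = 0 then 1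
      else (M.P (s ⟨t.val - 1, by have := t.isLt; omega⟩)
        (α ⟨t.val - 1, by have := t.isLt; omega⟩)).prob (s t))
      * (M.emit (s t)).prob (ω t)
      * (π (h + t.val + 1)
          (Hist.extend τ a ω α (t.val + 1) (by have := t.isLt; omega))).prob (α t))

theorem contTail_congr {S A O : Type} [Fintype S] [Fintype A] [Fintype O]
    (M : POMDP S A O) (π : Policy O A) {L h m : ℕ} (hL2 : 2 ≤ L) (hL : L - 1 ≤ h)
    (hm : h + m ≤ M.H) (hπ : IsLStepPolicy M L π)
    (τ τ' : Hist O A h) (a a' : A)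
    (hc : ctxt (Hist.window L hL τ) a = ctxt (Hist.window L hL τ') a')
    (s : Fin m → S) (ω : Fin m → O) (α : Fin m → A) :
    contTail M π τ a s ω α = contTail M π τ' a' s ω α := by
  unfold contTail
  refine Finset.prod_congr rfl fun t _ => ?_
  have ht := t.isLt
  have := hπ (h + t.val + 1) (by omega) (by omega)
    (Hist.extend τ a ω α (t.val + 1) (by omega))
    (Hist.extend τ' a' ω α (t.val + 1) (by omega))
    (window_extend hL2 hL τ τ' a a' hc ω α t.val (by omega) (by omega))
  rw [this]

theorem cont_factor {S A O : Type} [Fintype S] [Fintype A] [Fintype O]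
    (M : POMDP S A O) (π : Policy O A) {h m : ℕ} (hm : 0 < m)
    (τ : Hist O A h) (a : A) (s0 : S) (s : Fin m → S) (ω : Fin m → O) (α : Fin m → A) :
    (∏ t : Fin m,
        ((M.P ((Fin.cons s0 s : Fin (m + 1) → S) t.castSucc)
              (if ht : t.val = 0 then a
               else α ⟨t.val - 1, by have := t.isLt; omega⟩)).prob
                ((Fin.cons s0 s : Fin (m + 1) → S) t.succ)
          * (M.emit ((Fin.cons s0 s : Fin (m + 1) → S) t.succ)).prob (ω t)
          * (π (h + t.val + 1)
              (Hist.extend τ a ω α (t.val + 1)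
                (by have := t.isLt; omega))).prob (α t)))
      = (M.P s0 a).prob (s ⟨0, hm⟩) * contTail M π τ a s ω α := by
  obtain ⟨m, rfl⟩ : ∃ n, m = n + 1 := ⟨m - 1, by omega⟩
  unfold contTail
  rw [Fin.prod_univ_succ, Fin.prod_univ_succ, ← mul_assoc]
  congr 1
  · simp
    ring

/-- The latent representation. -/
noncomputable def latent {S A O : Type} [Fintype S] [Fintype A] [Fintype O]
    [DecidableEq A] [DecidableEq O]
    (M : POMDP S A O) (L : ℕ) (pstar : Window O A L → FDist S) (x : Window O A L) (a : A) :
    FDist (S × (Fin (L - 1) → O × A)) where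
  prob z := if z.2 = ctxt x a then ∑ s0, (pstar x).prob s0 * (M.P s0 a).prob z.1 else 0
  nonneg z := by
    split_ifs
    · exact Finset.sum_nonneg fun s _ => mul_nonneg ((pstar x).nonneg _) ((M.P s a).nonneg _)
    · exact le_rfl
  sum_one := by
    rw [Fintype.sum_prod_type]
    simp only [Finset.sum_ite_eq', Finset.mem_univ, if_true, Finset.sum_ite_eq]
    rw [Finset.sum_comm]
    simp only [← Finset.mul_sum, FDist.sum_one, mul_one]

/-- Transport of a distribution to `Fin n`. -/
noncomputable def FDist.toFin {Z : Type} [Fintype Z] (d : FDist Z) :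
    FDist (Fin (Fintype.card Z)) where
  prob z := d.prob ((Fintype.equivFin Z).symm z)
  nonneg z := d.nonneg _
  sum_one := by
    rw [Equiv.sum_comp (Fintype.equivFin Z).symm d.prob]; exact d.sum_one

/-- The value of the reward at index `k` given the next state and the context. -/
noncomputable def wfun {S A O : Type} [Fintype S] [Fintype A] [Fintype O] [DecidableEq S]
    (M : POMDP S A O) (π : Policy O A) {h m : ℕ} (k : Fin m)
    (τ : Hist O A h) (a : A) (s' : S) : ℝ :=
  ∑ s : Fin m → S, ∑ ω : Fin m → O, ∑ α : Fin m → A,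
    if s ⟨0, by have := k.isLt; omega⟩ = s' then
      contTail M π τ a s ω α * M.r (ω k) (α k) else 0

/-- In an `L`-decodable finite POMDP, there is a latent space `Z` with
`|Z| ≤ |S|·(|O|·|A|)^(L-1)` and a representation `p : X × A → PMF(Z)`, independent of
the policy and the step, such that for every `L`-step policy `π`, every step `h` with
`L-1 ≤ h ≤ H`, and every `k ∈ {1, …, L-1}` with `h + k ≤ H`, there exists `w_k : Z → ℝ`
with: the expectation of `r(o_{h+k}, a_{h+k})` under the continuation process from
`(τ_h, a)` equals `Σ_z p(x_h, a)(z)·w_k(z)`. -/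
theorem statement2
    {S A O : Type} [Fintype S] [Fintype A] [Fintype O]
    [Nonempty S] [Nonempty A] [Nonempty O]
    [DecidableEq S] [DecidableEq A] [DecidableEq O]
    (M : POMDP S A O) (L : ℕ) (hL1 : 1 ≤ L)
    (pstar : Window O A L → FDist S)
    (hdec : IsDecodable M L pstar) :
    ∃ n : ℕ, n ≤ Fintype.card S * (Fintype.card O * Fintype.card A) ^ (L - 1) ∧
      ∃ p : Window O A L → A → FDist (Fin n),
        ∀ π : Policy O A, IsLStepPolicy M L π →
          ∀ (h : ℕ) (hL : L - 1 ≤ h) (hh : h ≤ M.H),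
            ∀ (k : ℕ) (hk1 : 1 ≤ k) (hkL : k ≤ L - 1) (hhk : h + k ≤ M.H),
              ∃ w : Fin n → ℝ,
                ∀ τ : Hist O A h, Admissible M hh τ → ∀ a : A,
                  (∑ c : ContOutcome S O A (M.H - h),
                      contProb M π hh τ a c *
                        M.r (c.2.1 ⟨k - 1, by omega⟩) (c.2.2 ⟨k - 1, by omega⟩)) =
                    ∑ z : Fin n, (p (Hist.window L hL τ) a).prob z * w z := by
  classical
  refine ⟨Fintype.card (S × (Fin (L - 1) → O × A)), by simp, fun x a =>
    (latent M L pstar x a).toFin, ?_⟩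
  intro π hπ h hL hh k hk1 hkL hhk
  have hL2 : 2 ≤ L := by omega
  have hm : 0 < M.H - h := by omega
  let kk : Fin (M.H - h) := ⟨k - 1, by omega⟩
  let w : S × (Fin (L - 1) → O × A) → ℝ := fun z =>
    if hz : ∃ q : Hist O A h × A, ctxt (Hist.window L hL q.1) q.2 = z.2 then
      wfun M π kk hz.choose.1 hz.choose.2 z.1 else 0
  have hw : ∀ (τ : Hist O A h) (a : A) (s' : S),
      w (s', ctxt (Hist.window L hL τ) a) = wfun M π kk τ a s' := by
    intro τ a s'
    have hz : ∃ q : Hist O A h × A,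
        ctxt (Hist.window L hL q.1) q.2 = ctxt (Hist.window L hL τ) a := ⟨(τ, a), rfl⟩
    simp only [w]
    rw [dif_pos hz]
    unfold wfun
    refine Finset.sum_congr rfl fun s _ => Finset.sum_congr rfl fun ω _ =>
      Finset.sum_congr rfl fun α _ => ?_
    rw [contTail_congr M π hL2 hL (by omega) hπ _ _ _ _ hz.choose_spec s ω α]
  refine ⟨fun z => w ((Fintype.equivFin _).symm z), ?_⟩
  intro τ hτ a
  have hR : (∑ z, ((latent M L pstar (Hist.window L hL τ) a).toFin).prob z *
      w ((Fintype.equivFin _).symm z)) =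
      ∑ s', ∑ s0, (pstar (Hist.window L hL τ)).prob s0 * (M.P s0 a).prob s' *
        wfun M π kk τ a s' := by
    unfold FDist.toFin
    rw [Equiv.sum_comp (Fintype.equivFin (S × (Fin (L - 1) → O × A))).symm
      (fun z => (latent M L pstar (Hist.window L hL τ) a).prob z * w z)]
    unfold latent
    rw [Fintype.sum_prod_type]
    simp only [ite_mul, zero_mul, Finset.sum_ite_eq', Finset.mem_univ, if_true,
      Finset.sum_ite_eq, hw, Finset.sum_mul]
  refine Eq.trans ?_ hR.symm
  rw [Fintype.sum_prod_type, ← Equiv.sum_comp (Fin.consEquiv (fun _ : Fin (M.H - h + 1) => S)),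
    Fintype.sum_prod_type, Finset.sum_comm (s := (Finset.univ : Finset S))]
  rw [Finset.sum_comm (s := (Finset.univ : Finset S)) (t := (Finset.univ : Finset S)) (f := fun s' s0 => (pstar (Hist.window L hL τ)).prob s0 * (M.P s0 a).prob s' *
        wfun M π kk τ a s'), Finset.sum_comm]
  refine Finset.sum_congr rfl fun s0 _ => ?_
  have key : ∀ (s : Fin (M.H - h) → S) (ω : Fin (M.H - h) → O) (α : Fin (M.H - h) → A),
      contProb M π hh τ a ((Fin.cons s0 s : Fin (M.H - h + 1) → S), ω, α) =
        (pstar (Hist.window L hL τ)).prob s0 * (M.P s0 a).prob (s ⟨0, hm⟩) *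
          contTail M π τ a s ω α := by
    intro s ω α
    unfold contProb
    dsimp only
    rw [cont_factor M π hm τ a s0 s ω α, hdec h hh hL τ hτ, Fin.cons_zero, mul_assoc]
  have key2 : ∀ s' : S, (pstar (Hist.window L hL τ)).prob s0 * (M.P s0 a).prob s' *
        wfun M π kk τ a s' =
      ∑ s : Fin (M.H - h) → S, if s ⟨0, hm⟩ = s' then
        ∑ ω : Fin (M.H - h) → O, ∑ α : Fin (M.H - h) → A,
        (pstar (Hist.window L hL τ)).prob s0 * (M.P s0 a).prob s' *
          contTail M π τ a s ω α * M.r (ω kk) (α kk) else 0 := by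
    intro s'
    unfold wfun
    rw [Finset.mul_sum]
    refine Finset.sum_congr rfl fun s _ => ?_
    split_ifs with hs
    · simp only [Finset.mul_sum, mul_assoc]
    · simp
  simp only [key2]
  rw [Finset.sum_comm (s := (Finset.univ : Finset S))]
  refine Finset.sum_congr rfl fun s _ => ?_
  rw [Finset.sum_ite_eq, if_pos (Finset.mem_univ _), Fintype.sum_prod_type]
  refine Finset.sum_congr rfl fun ω _ => Finset.sum_congr rfl fun α _ => ?_
  exact congrArg (· * M.r (ω kk) (α kk)) (key s ω α)
end
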